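/- Assume P does not lie on a median of ABC (a line joining a vertex to the midpoint of the opposite side). Let M = T_P ∘ K⁻¹ ∘ T_{P′} and V = PQ·P′Q′. Then M(O) = Q and M(O′) = Q′, the lines OQ and O′Q′ are distinct, and if M is a homothety then its unique fixed point S satisfies S = OQ·GV = OQ·O′Q′; that is, S lies on all three lines OQ, O′Q′ and GV. -/

import Mathlib

noncomputable section

/-- The real affine plane. -/
abbrev Pt : Type := ℝ × ℝ

/-- `u` and `v` are parallel vectors (the zero vector is parallel to everything). -/
def Par (u v : Pt) : Prop := ∃ t : ℝ, u = t • v ∨ v = t • u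

/-- The centroid of the triangle `ABC`. -/
def cent (A B C : Pt) : Pt := (3⁻¹ : ℝ) • (A + B + C)

/-- The homothety with center `Z` and ratio `r`. -/
def homoth (Z : Pt) (r : ℝ) (X : Pt) : Pt := Z + r • (X - Z)

/-- The value at `p` of the quadratic polynomial with coefficient vector `c`. -/
def qval (c : Fin 6 → ℝ) (p : Pt) : ℝ :=
  c 0 * p.1 ^ 2 + c 1 * p.1 * p.2 + c 2 * p.2 ^ 2 + c 3 * p.1 + c 4 * p.2 + c 5

/-- `S` is a conic: the zero locus of a real polynomial of total degree 2. -/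
def IsConic (S : Set Pt) : Prop :=
  ∃ c : Fin 6 → ℝ, ¬(c 0 = 0 ∧ c 1 = 0 ∧ c 2 = 0) ∧ S = {p | qval c p = 0}

/-- `Z` is a center of symmetry of `S`. -/
def IsCenterOf (Z : Pt) (S : Set Pt) : Prop :=
  ∀ p ∈ S, (2 : ℝ) • Z - p ∈ S

/-- The gradient at `p` of the quadratic polynomial with coefficients `c`. -/
def qgrad (c : Fin 6 → ℝ) (p : Pt) : Pt :=
  (2 * c 0 * p.1 + c 1 * p.2 + c 3, c 1 * p.1 + 2 * c 2 * p.2 + c 4)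

/-- The line through `X` and `Y`. -/
def lineThru (X Y : Pt) : Set Pt := {p | ∃ t : ℝ, p = X + t • (Y - X)}

/-- `L` is the tangent line at the nonsingular point `p` of the conic with coefficients `c`. -/
def IsTangentLineAt (c : Fin 6 → ℝ) (L : Set Pt) (p : Pt) : Prop :=
  qval c p = 0 ∧ qgrad c p ≠ 0 ∧
  L = {q | (qgrad c p).1 * (q.1 - p.1) + (qgrad c p).2 * (q.2 - p.2) = 0}

/-!
Let `p = P - G`, `p' = P' - G` and `κ = (x + y + z) (1/x + 1/y + 1/z)`. Evaluation at the vertices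
of `ABC` shows that `M X = G - κ/(κ - 1) (p + p') - 4/(κ - 1) (X - G)`. This formula is symmetric in
`P` and `P'`, hence `M` is also equal to `T_P' ∘ K⁻¹ ∘ T_P`.

The map `T_P` fixes `Q`, and `K⁻¹ (T_P' D₀)` lies on `AQ`, so `M D₀` lies on `DQ`. As the linear
part of `M` is a scalar and `OD₀ ∥ QD`, the point `M O` lies on `DQ` too. In the same way it lies on
`EQ`, so `M O = Q`. Exchanging `P` and `P'` gives `M O' = Q'`.

Since `P` lies on no median, `p` and `p'` are linearly independent, and the rest can be read off in
this basis: `V = 2Q - P = G - (p + p')`, and `M S = S` says `(κ + 3) (S - G) = κ (V - G)`.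
-/

open scoped Affine

section Barycentric

variable {K V W : Type*} [Field K] [AddCommGroup V] [Module K V] [AddCommGroup W] [Module K W]
  {A B C D X Y Z : V} {x y z : K}

/-- The point with homogeneous barycentric coordinates `(x : y : z)` with respect to `ABC`;
the value is meaningful only if `x + y + z ≠ 0`. -/
def bary (A B C : V) (x y z : K) : V := (x + y + z)⁻¹ • (x • A + y • B + z • C)

theorem bary_rotate (A B C : V) (x y z : K) : bary B C A y z x = bary A B C x y z := by
  rw [bary, bary, show y + z + x = x + y + z by ring,
    show y • B + z • C + x • A = x • A + y • B + z • C by abel]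

theorem sum_smul_bary (A B C : V) (hs : x + y + z ≠ 0) :
    (x + y + z) • bary A B C x y z = x • A + y • B + z • C :=
  smul_inv_smul₀ hs _

theorem bary_mul_left (A B C : V) {t : K} (ht : t ≠ 0) (x y z : K) :
    bary A B C (t * x) (t * y) (t * z) = bary A B C x y z := by
  simp only [bary, ← mul_add, mul_smul, ← smul_add, mul_inv_rev]
  rw [inv_smul_smul₀ ht]

theorem bary_of_sum_eq_one (A B C : V) (hs : x + y + z = 1) :
    bary A B C x y z = x • A + y • B + z • C := by
  rw [bary, hs, inv_one, one_smul]

theorem bary_inv (A B C : V) (hx : x ≠ 0) (hy : y ≠ 0) (hz : z ≠ 0) :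
    bary A B C x⁻¹ y⁻¹ z⁻¹ = (y * z / (x * y + y * z + z * x)) • A +
      (x * z / (x * y + y * z + z * x)) • B + (x * y / (x * y + y * z + z * x)) • C := by
  rw [← bary_mul_left A B C (mul_ne_zero (mul_ne_zero hx hy) hz), bary,
    show x * y * z * x⁻¹ = y * z by field_simp, show x * y * z * y⁻¹ = x * z by field_simp,
    show x * y * z * z⁻¹ = x * y by field_simp]
  match_scalars <;> ring

theorem midpoint_eq_bary [Invertible (2 : K)] (A B C : V) :
    midpoint K B C = bary A B C (0 : K) 1 1 := by
  simp only [midpoint_eq_smul_add, bary, invOf_eq_inv, zero_add, one_add_one_eq_two, zero_smul,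
    one_smul]

theorem map_bary (T : V →ᵃ[K] W) (A B C : V) (hs : x + y + z ≠ 0) :
    T (bary A B C x y z) = bary (T A) (T B) (T C) x y z := by
  have hw : ∑ i, ![x / (x + y + z), y / (x + y + z), z / (x + y + z)] i = 1 := by
    simp [Fin.sum_univ_three]
    field_simp
  have h := Finset.univ.map_affineCombination ![A, B, C] _ hw T
  simp only [Finset.affineCombination_eq_linear_combination _ _ _ hw, Fin.sum_univ_three] at h
  simpa [bary, div_eq_inv_mul, mul_smul] using h

theorem affineIndependent_triple_rotate (h : AffineIndependent K ![A, B, C]) :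
    AffineIndependent K ![B, C, A] := by
  convert h.comp_embedding (finRotate 3).toEmbedding using 1
  ext i
  fin_cases i <;> rfl

theorem affineSpan_triple_eq_top (hdim : Module.finrank K V = 2)
    (h : AffineIndependent K ![A, B, C]) : affineSpan K {A, B, C} = ⊤ := by
  have : FiniteDimensional K V := FiniteDimensional.of_finrank_eq_succ hdim
  have hspan := h.affineSpan_eq_top_iff_card_eq_finrank_add_one.2 (by rw [hdim, Fintype.card_fin])
  rwa [Matrix.range_cons, Matrix.range_cons_cons_empty, Set.singleton_union] at hspan

theorem weights_eq_zero_of_affineIndependent (h : AffineIndependent K ![A, B, C])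
    (hs : x + y + z = 0) (h0 : x • A + y • B + z • C = 0) : x = 0 ∧ y = 0 ∧ z = 0 := by
  have hw := affineIndependent_iff.1 h Finset.univ ![x, y, z]
    (by simpa [Fin.sum_univ_three] using hs) (by simpa [Fin.sum_univ_three] using h0)
  exact ⟨hw 0 (Finset.mem_univ _), hw 1 (Finset.mem_univ _), hw 2 (Finset.mem_univ _)⟩

theorem exists_eq_lineMap_of_collinear (h : Collinear K {X, Y, Z}) (hne : X ≠ Y) :
    ∃ t : K, Z = AffineMap.lineMap X Y t := by
  have hZ : Z ∈ line[K, X, Y] :=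
    h.mem_affineSpan_of_mem_of_ne (by simp) (by simp) (by simp) hne
  obtain ⟨t, ht⟩ := mem_affineSpan_pair_iff_exists_lineMap_eq.1 hZ
  exact ⟨t, ht.symm⟩

theorem eq_bary_of_collinear (h : AffineIndependent K ![A, B, C]) (hs : x + y + z ≠ 0)
    (hyz : y + z ≠ 0) (hAP : Collinear K {A, bary A B C x y z, D})
    (hBC : Collinear K {B, C, D}) : D = bary A B C 0 y z := by
  have hP : (x + y + z) • bary A B C x y z = x • A + y • B + z • C := sum_smul_bary A B C hs
  have hne : A ≠ bary A B C x y z := fun hA => by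
    rw [← hA] at hP
    obtain ⟨h₁, -, -⟩ := weights_eq_zero_of_affineIndependent h
      (x := y + z) (y := -y) (z := -z) (by ring) (by linear_combination (norm := module) hP)
    exact hyz h₁
  have hBC' : B ≠ C := h.injective.ne (by decide : (1 : Fin 3) ≠ 2)
  obtain ⟨s, hDs⟩ := exists_eq_lineMap_of_collinear hAP hne
  obtain ⟨t, hDt⟩ := exists_eq_lineMap_of_collinear hBC hBC'
  rw [AffineMap.lineMap_apply_module] at hDs hDt
  obtain ⟨hA, hB, -⟩ := weights_eq_zero_of_affineIndependent h (x := x + y + z - s * (y + z))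
    (y := s * y - (x + y + z) * (1 - t)) (z := s * z - (x + y + z) * t) (by ring)
    (by linear_combination (norm := module) (x + y + z) • (hDt - hDs) - s • hP)
  have ht : (1 - t) * (y + z) = y := by
    apply mul_left_cancel₀ hs
    linear_combination -y * hA - (y + z) * hB
  rw [hDt, bary, zero_add, eq_inv_smul_iff₀ hyz]
  match_scalars
  · linear_combination ht
  · linear_combination -ht
  · ring

theorem linearIndependent_sub_bary (h : AffineIndependent K ![A, B, C]) (hs : x + y + z ≠ 0)
    (hz : z ≠ 0) :
    LinearIndependent K ![A - bary A B C x y z, B - bary A B C x y z] := by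
  have hP : (x + y + z) • bary A B C x y z = x • A + y • B + z • C := sum_smul_bary A B C hs
  refine LinearIndependent.pair_iff.2 fun s t hst => ?_
  obtain ⟨hA, hB, hC⟩ := weights_eq_zero_of_affineIndependent h (x := s * (x + y + z) - (s + t) * x)
    (y := t * (x + y + z) - (s + t) * y) (z := -(s + t) * z) (by ring)
    (by linear_combination (norm := module) (x + y + z) • hst + (s + t) • hP)
  have hsum : s + t = 0 := (neg_eq_zero.1 ((mul_eq_zero.1 hC).resolve_right hz))
  simpa [hsum, hs] using And.intro hA hB

end Barycentric

section CevianMaps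

variable {K V : Type*} [Field K] [AddCommGroup V] [Module K V] {A B C O : V} {x y z : K}
  {T T' : V →ᵃ[K] V}

/-- The weights of a point lying neither on a side line of the reference triangle, nor on a side
line of its anticomplementary triangle, nor on its Steiner circumellipse. -/
structure IsOrdinary (x y z : K) : Prop where
  x_ne : x ≠ 0
  y_ne : y ≠ 0
  z_ne : z ≠ 0
  yz_ne : y + z ≠ 0
  zx_ne : z + x ≠ 0
  xy_ne : x + y ≠ 0
  sum_ne : x + y + z ≠ 0
  inv_sum_ne : x⁻¹ + y⁻¹ + z⁻¹ ≠ 0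

theorem inv_add_inv_ne_zero {a b : K} (ha : a ≠ 0) (hb : b ≠ 0) (hab : a + b ≠ 0) :
    a⁻¹ + b⁻¹ ≠ 0 := by
  rw [inv_add_inv ha hb]
  exact div_ne_zero hab (mul_ne_zero ha hb)

theorem IsOrdinary.inv (h : IsOrdinary x y z) : IsOrdinary x⁻¹ y⁻¹ z⁻¹ where
  x_ne := inv_ne_zero h.x_ne
  y_ne := inv_ne_zero h.y_ne
  z_ne := inv_ne_zero h.z_ne
  yz_ne := inv_add_inv_ne_zero h.y_ne h.z_ne h.yz_ne
  zx_ne := inv_add_inv_ne_zero h.z_ne h.x_ne h.zx_ne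
  xy_ne := inv_add_inv_ne_zero h.x_ne h.y_ne h.xy_ne
  sum_ne := h.inv_sum_ne
  inv_sum_ne := by simpa only [inv_inv] using h.sum_ne

theorem isOrdinary_of_sum_eq_one (hs : x + y + z = 1) (hx₀ : x ≠ 0) (hy₀ : y ≠ 0) (hz₀ : z ≠ 0)
    (hx₁ : x ≠ 1) (hy₁ : y ≠ 1) (hz₁ : z ≠ 1) (hst : x * y + y * z + z * x ≠ 0) :
    IsOrdinary x y z where
  x_ne := hx₀
  y_ne := hy₀
  z_ne := hz₀
  yz_ne h := hx₁ (by linear_combination hs - h)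
  zx_ne h := hy₁ (by linear_combination hs - h)
  xy_ne h := hz₁ (by linear_combination hs - h)
  sum_ne := by rw [hs]; exact one_ne_zero
  inv_sum_ne h := hst (by field_simp at h; linear_combination h)

theorem IsOrdinary.rotate (h : IsOrdinary x y z) : IsOrdinary y z x where
  x_ne := h.y_ne
  y_ne := h.z_ne
  z_ne := h.x_ne
  yz_ne := h.zx_ne
  zx_ne := h.xy_ne
  xy_ne := h.yz_ne
  sum_ne := by simpa only [add_rotate x y z] using h.sum_ne
  inv_sum_ne := by simpa only [add_rotate x⁻¹ y⁻¹ z⁻¹] using h.inv_sum_ne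

/-- The affine map `T` takes `ABC` to the cevian triangle of the point `(x : y : z)`. -/
structure IsCevianMap (A B C : V) (x y z : K) (T : V →ᵃ[K] V) : Prop where
  apply_A : T A = bary A B C 0 y z
  apply_B : T B = bary A B C x 0 z
  apply_C : T C = bary A B C x y 0

theorem IsCevianMap.rotate (hT : IsCevianMap A B C x y z T) : IsCevianMap B C A y z x T where
  apply_A := by rw [hT.apply_B, ← bary_rotate]
  apply_B := by rw [hT.apply_C, ← bary_rotate]
  apply_C := by rw [hT.apply_A, ← bary_rotate]

theorem IsCevianMap.apply_A_of_inv (hT : IsCevianMap A B C x⁻¹ y⁻¹ z⁻¹ T) (hy : y ≠ 0)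
    (hz : z ≠ 0) : T A = bary A B C 0 z y := by
  rw [hT.apply_A, ← bary_mul_left A B C (mul_ne_zero hy hz), mul_zero, mul_inv_cancel_right₀ hz,
    mul_comm y z, mul_inv_cancel_right₀ hy]

theorem isCevianMap_of_collinear (h : AffineIndependent K ![A, B, C]) (hP : IsOrdinary x y z)
    (hA : Collinear K {A, bary A B C x y z, T A} ∧ Collinear K {B, C, T A})
    (hB : Collinear K {B, bary A B C x y z, T B} ∧ Collinear K {A, C, T B})
    (hC : Collinear K {C, bary A B C x y z, T C} ∧ Collinear K {A, B, T C}) :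
    IsCevianMap A B C x y z T where
  apply_A := eq_bary_of_collinear h hP.sum_ne hP.yz_ne hA.1 hA.2
  apply_B := by
    rw [← bary_rotate, Set.insert_comm A C] at hB
    rw [← bary_rotate]
    exact eq_bary_of_collinear (affineIndependent_triple_rotate h) hP.rotate.sum_ne hP.zx_ne
      hB.1 hB.2
  apply_C := by
    rw [← bary_rotate, ← bary_rotate B] at hC ⊢
    exact eq_bary_of_collinear (affineIndependent_triple_rotate (affineIndependent_triple_rotate h))
      hP.rotate.rotate.sum_ne hP.xy_ne hC.1 hC.2

/-- The isotomcomplement of the point `(x : y : z)`: the complement of its isotomic conjugate. -/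
def isotomcomplement (A B C : V) (x y z : K) : V :=
  AffineMap.homothety (bary A B C (1 : K) 1 1) (-(1 / 2) : K) (bary A B C x⁻¹ y⁻¹ z⁻¹)

theorem isotomcomplement_rotate (A B C : V) (x y z : K) :
    isotomcomplement B C A y z x = isotomcomplement A B C x y z := by
  rw [isotomcomplement, isotomcomplement, bary_rotate A, bary_rotate A]

theorem isotomcomplement_inv (A B C : V) (x y z : K) : isotomcomplement A B C x⁻¹ y⁻¹ z⁻¹ =
    AffineMap.homothety (bary A B C (1 : K) 1 1) (-(1 / 2) : K) (bary A B C x y z) := by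
  simp only [isotomcomplement, inv_inv]

variable (K) in
/-- The anticomplement map of the triangle `ABC`. -/
def anticomplement (A B C : V) : V →ᵃ[K] V := AffineMap.homothety (bary A B C (1 : K) 1 1) (-2 : K)

theorem anticomplement_rotate (A B C : V) : anticomplement K B C A = anticomplement K A B C := by
  rw [anticomplement, anticomplement, bary_rotate]

/-- `(x + y + z) (1/x + 1/y + 1/z)`, the parameter of `isotomicMap`. It is invariant under isotomic
conjugation, vanishes on the Steiner circumellipse and on the line at infinity, and equals `1`
exactly on the side lines of the anticomplementary triangle. -/
def isotomicInvariant (x y z : K) : K := (x + y + z) * (x⁻¹ + y⁻¹ + z⁻¹)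

theorem isotomicInvariant_sub_one (hx : x ≠ 0) (hy : y ≠ 0) (hz : z ≠ 0) :
    isotomicInvariant x y z - 1 = (y + z) * (z + x) * (x + y) / (x * y * z) := by
  rw [isotomicInvariant]
  field_simp
  ring

theorem IsOrdinary.isotomicInvariant_ne_zero (hP : IsOrdinary x y z) :
    isotomicInvariant x y z ≠ 0 :=
  mul_ne_zero hP.sum_ne hP.inv_sum_ne

theorem IsOrdinary.isotomicInvariant_ne_one (hP : IsOrdinary x y z) :
    isotomicInvariant x y z ≠ 1 := by
  rw [← sub_ne_zero, isotomicInvariant_sub_one hP.x_ne hP.y_ne hP.z_ne]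
  exact div_ne_zero (mul_ne_zero (mul_ne_zero hP.yz_ne hP.zx_ne) hP.xy_ne)
    (mul_ne_zero (mul_ne_zero hP.x_ne hP.y_ne) hP.z_ne)

theorem isotomicInvariant_rotate (x y z : K) :
    isotomicInvariant y z x = isotomicInvariant x y z := by
  rw [isotomicInvariant, isotomicInvariant, add_rotate x, add_rotate x⁻¹]

theorem isotomicInvariant_inv (x y z : K) :
    isotomicInvariant x⁻¹ y⁻¹ z⁻¹ = isotomicInvariant x y z := by
  simp only [isotomicInvariant, inv_inv, mul_comm]

theorem isotomicInvariant_smul_bary_add_bary (A B C : V) (hs : x + y + z ≠ 0)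
    (hs' : x⁻¹ + y⁻¹ + z⁻¹ ≠ 0) :
    isotomicInvariant x y z • (bary A B C x y z + bary A B C x⁻¹ y⁻¹ z⁻¹) =
      (x⁻¹ + y⁻¹ + z⁻¹) • (x • A + y • B + z • C) +
        (x + y + z) • (x⁻¹ • A + y⁻¹ • B + z⁻¹ • C) := by
  rw [← sum_smul_bary A B C hs, ← sum_smul_bary A B C hs', isotomicInvariant]
  module

/-- The closed form of the composite `T_P ∘ K⁻¹ ∘ T_P'` of the cevian maps of isotomic conjugates
`P`, `P'` with the anticomplement map, where `G` is the centroid and `κ` the `isotomicInvariant`.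
The value is meaningful only if `κ ≠ 1`. -/
def isotomicMap (κ : K) (G P P' : V) : V →ᵃ[K] V :=
  AffineMap.const K V (G - (κ / (κ - 1)) • (P - G + (P' - G))) -
    (4 / (κ - 1)) • (AffineMap.id K V - AffineMap.const K V G)

theorem isotomicMap_apply (κ : K) (G P P' X : V) : isotomicMap κ G P P' X =
    G - (κ / (κ - 1)) • (P - G + (P' - G)) - (4 / (κ - 1)) • (X - G) := rfl

theorem isotomicMap_comm (κ : K) (G P P' : V) : isotomicMap κ G P P' = isotomicMap κ G P' P := by
  rw [isotomicMap, isotomicMap, add_comm (P - G)]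

theorem sub_one_smul_isotomicMap_sub {κ : K} (hκ : κ ≠ 1) (G P P' X : V) :
    (κ - 1) • (isotomicMap κ G P P' X - G) = -κ • (P - G + (P' - G)) - (4 : K) • (X - G) := by
  have hκ' := sub_ne_zero.2 hκ
  rw [isotomicMap_apply]
  match_scalars <;> field_simp
  ring

theorem isotomicMap_sub (κ : K) (G P P' X Y : V) :
    isotomicMap κ G P P' X - isotomicMap κ G P P' Y = -(4 / (κ - 1)) • (X - Y) := by
  rw [isotomicMap_apply, isotomicMap_apply]
  module

variable [CharZero K]

theorem IsOrdinary.isotomcomplement_sum_ne (hP : IsOrdinary x y z) :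
    x * (y + z) + y * (z + x) + z * (x + y) ≠ 0 := by
  obtain ⟨hx, hy, hz, -, -, -, -, hs⟩ := hP
  have h := mul_ne_zero (mul_ne_zero two_ne_zero (mul_ne_zero (mul_ne_zero hx hy) hz)) hs
  field_simp at h
  convert h using 1
  ring

theorem isotomcomplement_eq_bary (A B C : V) (hP : IsOrdinary x y z) :
    isotomcomplement A B C x y z = bary A B C (x * (y + z)) (y * (z + x)) (z * (x + y)) := by
  have hG := sum_smul_bary A B C (x := (1 : K)) (y := 1) (z := 1) (by norm_num)
  have hP' := sum_smul_bary A B C hP.inv_sum_ne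
  have hQ : (2 * (x⁻¹ + y⁻¹ + z⁻¹)) • isotomcomplement A B C x y z =
      (y⁻¹ + z⁻¹) • A + (z⁻¹ + x⁻¹) • B + (x⁻¹ + y⁻¹) • C := by
    rw [isotomcomplement, AffineMap.homothety_apply, vsub_eq_sub, vadd_eq_add]
    linear_combination (norm := module) (x⁻¹ + y⁻¹ + z⁻¹) • hG - hP'
  obtain ⟨hx, hy, hz, -, -, -, -, -⟩ := id hP
  rw [bary, eq_inv_smul_iff₀ hP.isotomcomplement_sum_ne,
    show x * (y + z) + y * (z + x) + z * (x + y) = x * y * z * (2 * (x⁻¹ + y⁻¹ + z⁻¹)) by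
      field_simp; ring, mul_smul, hQ]
  match_scalars <;> field_simp <;> ring

theorem IsCevianMap.apply_isotomcomplement (hP : IsOrdinary x y z)
    (hT : IsCevianMap A B C x y z T) :
    T (isotomcomplement A B C x y z) = isotomcomplement A B C x y z := by
  rw [isotomcomplement_eq_bary A B C hP, map_bary T A B C hP.isotomcomplement_sum_ne,
    hT.apply_A, hT.apply_B, hT.apply_C]
  obtain ⟨hx, hy, hz, hyz, hzx, hxy, -, -⟩ := hP
  simp only [bary, zero_add, add_zero, zero_smul, add_comm x z]
  congr 1
  match_scalars <;> field_simp
  ring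

theorem anticomplement_apply (A B C X : V) :
    anticomplement K A B C X = A + B + C - (2 : K) • X := by
  simp only [anticomplement, AffineMap.homothety_apply, bary, vsub_eq_sub, vadd_eq_add]
  match_scalars <;> ring

theorem anticomplement_apply_midpoint (hP : IsOrdinary x y z)
    (hT' : IsCevianMap A B C x⁻¹ y⁻¹ z⁻¹ T') :
    anticomplement K A B C (T' (bary A B C (0 : K) 1 1)) =
      AffineMap.lineMap A (isotomcomplement A B C x y z)
        ((x * (y + z) + y * (z + x) + z * (x + y)) / ((z + x) * (x + y))) := by
  have hQ := sum_smul_bary A B C hP.isotomcomplement_sum_ne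
  have hTB := hT'.rotate.apply_A_of_inv hP.z_ne hP.x_ne
  have hTC := hT'.rotate.rotate.apply_A_of_inv hP.x_ne hP.y_ne
  rw [anticomplement_apply, map_bary _ _ _ _ (by norm_num), hTB, hTC,
    AffineMap.lineMap_apply_module, isotomcomplement_eq_bary A B C hP, div_eq_inv_mul,
    mul_smul _ _ (bary _ _ _ _ _ _), hQ]
  obtain ⟨-, -, -, -, hzx, hxy, -, -⟩ := hP
  simp only [bary, zero_add, zero_smul, add_comm y x, add_comm x z]
  match_scalars <;> field_simp <;> ring

theorem sub_one_smul_isotomicMap_centroid {κ : K} (hκ : κ ≠ 1) (A B C P P' X : V) :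
    (κ - 1) • isotomicMap κ (bary A B C (1 : K) 1 1) P P' X =
      (κ + 1) • (A + B + C) - (4 : K) • X - κ • (P + P') := by
  have hG := sum_smul_bary A B C (x := (1 : K)) (y := 1) (z := 1) (by norm_num)
  linear_combination (norm := module)
    sub_one_smul_isotomicMap_sub hκ (bary A B C (1 : K) 1 1) P P' X + (κ + 1) • hG

theorem cevian_comp_apply_vertex (hP : IsOrdinary x y z) (hT : IsCevianMap A B C x y z T)
    (hT' : IsCevianMap A B C x⁻¹ y⁻¹ z⁻¹ T') :
    T (anticomplement K A B C (T' A)) =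
      isotomicMap (isotomicInvariant x y z) (bary A B C (1 : K) 1 1) (bary A B C x y z)
        (bary A B C x⁻¹ y⁻¹ z⁻¹) A := by
  have hN : anticomplement K A B C (T' A) = bary A B C (y + z) (y - z) (z - y) := by
    rw [anticomplement_apply, hT'.apply_A_of_inv hP.y_ne hP.z_ne]
    have hyz := hP.yz_ne
    simp only [bary, zero_add, zero_smul, add_comm z y, add_assoc, sub_add_sub_cancel, sub_self,
      add_zero]
    match_scalars <;> field_simp <;> ring
  have hκ := hP.isotomicInvariant_ne_one
  apply smul_right_injective V (sub_ne_zero.2 hκ)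
  beta_reduce
  rw [sub_one_smul_isotomicMap_centroid hκ,
    isotomicInvariant_smul_bary_add_bary A B C hP.sum_ne hP.inv_sum_ne, hN,
    map_bary _ _ _ _ (by simpa using hP.yz_ne), hT.apply_A, hT.apply_B, hT.apply_C,
    isotomicInvariant_sub_one hP.x_ne hP.y_ne hP.z_ne, isotomicInvariant]
  obtain ⟨hx, hy, hz, hyz, hzx, hxy, -, -⟩ := hP
  simp only [bary, zero_add, zero_smul, add_assoc, sub_add_sub_cancel, sub_self, add_zero,
    add_comm x z]
  match_scalars <;> field_simp <;> ring

theorem cevian_comp_eq_isotomicMap (hABC : affineSpan K {A, B, C} = ⊤) (hP : IsOrdinary x y z)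
    (hT : IsCevianMap A B C x y z T) (hT' : IsCevianMap A B C x⁻¹ y⁻¹ z⁻¹ T') :
    T.comp ((anticomplement K A B C).comp T') =
      isotomicMap (isotomicInvariant x y z) (bary A B C (1 : K) 1 1) (bary A B C x y z)
        (bary A B C x⁻¹ y⁻¹ z⁻¹) := by
  refine AffineMap.ext_on hABC ?_
  rintro X (rfl | rfl | rfl)
  · exact cevian_comp_apply_vertex hP hT hT'
  · simpa only [AffineMap.comp_apply, bary_rotate, anticomplement_rotate,
      isotomicInvariant_rotate] using cevian_comp_apply_vertex hP.rotate hT.rotate hT'.rotate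
  · simpa only [AffineMap.comp_apply, bary_rotate, anticomplement_rotate,
      isotomicInvariant_rotate] using
      cevian_comp_apply_vertex hP.rotate.rotate hT.rotate.rotate hT'.rotate.rotate

theorem exists_cevian_comp_apply_sub_eq_smul (hP : IsOrdinary x y z)
    (hABC : affineSpan K {A, B, C} = ⊤) (hT : IsCevianMap A B C x y z T)
    (hT' : IsCevianMap A B C x⁻¹ y⁻¹ z⁻¹ T')
    (hO : ∃ t : K, bary A B C (0 : K) 1 1 - O = t • (T A - isotomcomplement A B C x y z)) :
    ∃ t : K, T (anticomplement K A B C (T' O)) - isotomcomplement A B C x y z =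
      t • (T A - isotomcomplement A B C x y z) := by
  obtain ⟨t, ht⟩ := hO
  set Q := isotomcomplement A B C x y z
  set κ := isotomicInvariant x y z
  have hM : ∀ X, T (anticomplement K A B C (T' X)) = _ :=
    DFunLike.congr_fun (cevian_comp_eq_isotomicMap hABC hP hT hT')
  obtain ⟨s, hs⟩ : ∃ s : K, T (anticomplement K A B C (T' (bary A B C (0 : K) 1 1))) =
      AffineMap.lineMap (T A) Q s :=
    ⟨_, by rw [anticomplement_apply_midpoint hP hT', AffineMap.apply_lineMap,
      hT.apply_isotomcomplement hP]⟩
  have hsub := isotomicMap_sub κ (bary A B C (1 : K) 1 1) (bary A B C x y z)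
    (bary A B C x⁻¹ y⁻¹ z⁻¹) (bary A B C (0 : K) 1 1) O
  rw [← hM, ← hM, hs, ht, AffineMap.lineMap_apply_module] at hsub
  exact ⟨1 - s + 4 / (κ - 1) * t, by linear_combination (norm := module) -hsub⟩

theorem IsCevianMap.linearIndependent_sub (hP : IsOrdinary x y z)
    (hABC : AffineIndependent K ![A, B, C]) (hT : IsCevianMap A B C x y z T)
    (hinj : Function.Injective T) :
    LinearIndependent K ![T A - isotomcomplement A B C x y z,
      T B - isotomcomplement A B C x y z] := by
  have hQ := hT.apply_isotomcomplement hP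
  have himage : ∀ X, T X - isotomcomplement A B C x y z =
      T.linear (X - isotomcomplement A B C x y z) := fun X => by
    rw [← vsub_eq_sub X, T.linearMap_vsub, hQ, vsub_eq_sub]
  rw [himage, himage, isotomcomplement_eq_bary A B C hP]
  refine LinearIndependent.pair_iff.2 fun s t hst => LinearIndependent.pair_iff.1
    (linearIndependent_sub_bary hABC hP.isotomcomplement_sum_ne (mul_ne_zero hP.z_ne hP.xy_ne)) s t
    (T.linear_injective_iff.2 hinj ?_)
  rw [map_add, map_smul, map_smul, map_zero]
  exact hst

theorem cevian_comp_comm (hP : IsOrdinary x y z) (hABC : affineSpan K {A, B, C} = ⊤)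
    (hT : IsCevianMap A B C x y z T) (hT' : IsCevianMap A B C x⁻¹ y⁻¹ z⁻¹ T') :
    T.comp ((anticomplement K A B C).comp T') = T'.comp ((anticomplement K A B C).comp T) := by
  rw [cevian_comp_eq_isotomicMap hABC hP hT hT',
    cevian_comp_eq_isotomicMap hABC hP.inv hT' (by simpa only [inv_inv] using hT),
    isotomicInvariant_inv, isotomicMap_comm]
  simp only [inv_inv]

theorem cevian_comp_apply_circumcenter (hP : IsOrdinary x y z)
    (hABC : AffineIndependent K ![A, B, C]) (hspan : affineSpan K {A, B, C} = ⊤)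
    (hT : IsCevianMap A B C x y z T) (hinj : Function.Injective T)
    (hT' : IsCevianMap A B C x⁻¹ y⁻¹ z⁻¹ T')
    (hA : ∃ t : K, bary A B C (0 : K) 1 1 - O = t • (T A - isotomcomplement A B C x y z))
    (hB : ∃ t : K, bary B C A (0 : K) 1 1 - O = t • (T B - isotomcomplement A B C x y z)) :
    T (anticomplement K A B C (T' O)) = isotomcomplement A B C x y z := by
  obtain ⟨a, ha⟩ := exists_cevian_comp_apply_sub_eq_smul hP hspan hT hT' hA
  have hspan' : affineSpan K {B, C, A} = ⊤ := by
    rwa [Set.insert_comm, Set.pair_comm, Set.insert_comm, Set.pair_comm]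
  obtain ⟨b, hb⟩ := exists_cevian_comp_apply_sub_eq_smul hP.rotate hspan' hT.rotate hT'.rotate
    (by simpa only [isotomcomplement_rotate] using hB)
  rw [isotomcomplement_rotate, anticomplement_rotate] at hb
  have h := LinearIndependent.pair_iff.1 (hT.linearIndependent_sub hP hABC hinj) a (-b)
    (by linear_combination (norm := module) hb - ha)
  rw [← sub_eq_zero, ha, h.1, zero_smul]

theorem linearIndependent_bary_sub_centroid (hP : IsOrdinary x y z)
    (hABC : AffineIndependent K ![A, B, C]) (hxy : x ≠ y) (hyz : y ≠ z) (hxz : x ≠ z) :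
    LinearIndependent K ![bary A B C x y z - bary A B C (1 : K) 1 1,
      bary A B C x⁻¹ y⁻¹ z⁻¹ - bary A B C (1 : K) 1 1] := by
  refine LinearIndependent.pair_iff.2 fun s t hst => ?_
  obtain ⟨hx, hy, hz, -, -, -, hs, hs'⟩ := hP
  set a := s / (x + y + z) with ha
  set b := t / (x⁻¹ + y⁻¹ + z⁻¹) with hb
  obtain ⟨hA, hB, hC⟩ := weights_eq_zero_of_affineIndependent hABC
    (x := a * x + b * x⁻¹ - (s + t) / 3) (y := a * y + b * y⁻¹ - (s + t) / 3)
    (z := a * z + b * z⁻¹ - (s + t) / 3)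
    (by linear_combination div_mul_cancel₀ s hs + div_mul_cancel₀ t hs') (by
      rw [← hst, ha, hb]
      simp only [bary]
      module)
  -- the quadratic `a w² - (s + t) / 3 w + b` has the three distinct roots `x`, `y`, `z`
  have root : ∀ w ≠ 0, a * w + b * w⁻¹ - (s + t) / 3 = 0 → a * w ^ 2 - (s + t) / 3 * w + b = 0 :=
    fun w hw h => by linear_combination w * h - b * mul_inv_cancel₀ hw
  have hAB : a * (x + y) - (s + t) / 3 = 0 := mul_left_cancel₀ (sub_ne_zero.2 hxy) (by
    linear_combination root x hx hA - root y hy hB)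
  have hBC : a * (y + z) - (s + t) / 3 = 0 := mul_left_cancel₀ (sub_ne_zero.2 hyz) (by
    linear_combination root y hy hB - root z hz hC)
  have ha₀ : a = 0 := mul_left_cancel₀ (sub_ne_zero.2 hxz) (by linear_combination hAB - hBC)
  have hs₀ : s = 0 := (div_eq_zero_iff.1 ha₀).resolve_right hs
  refine ⟨hs₀, ?_⟩
  linear_combination (-3) * hAB + 3 * (x + y) * ha₀ - hs₀

end CevianMaps

section Configuration

variable {K V : Type*} [Field K] [AddCommGroup V] [Module K V] {G O P P' S X Y : V} {κ r : K}

theorem mem_affineSpan_pair_of_homothety_eq (hr : r ≠ 1)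
    (h : AffineMap.homothety S r X = Y) : S ∈ line[K, X, Y] := by
  refine mem_affineSpan_pair_iff_exists_lineMap_eq.2 ⟨1 / (1 - r), ?_⟩
  have hr' : 1 - r ≠ 0 := sub_ne_zero.2 hr.symm
  rw [← h, AffineMap.homothety_apply, AffineMap.lineMap_apply]
  simp only [vsub_eq_sub, vadd_eq_add]
  match_scalars <;> field_simp <;> ring

variable [CharZero K]

theorem four_smul_sub_of_isotomicMap_eq (hκ : κ ≠ 1)
    (hO : isotomicMap κ G P P' O = AffineMap.homothety G (-(1 / 2) : K) P') :
    (4 : K) • (O - AffineMap.homothety G (-(1 / 2) : K) P') =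
      -κ • (P - G) - ((κ - 3) / 2) • (P' - G) := by
  have h := sub_one_smul_isotomicMap_sub hκ G P P' O
  rw [hO] at h
  simp only [AffineMap.homothety_apply, vsub_eq_sub, vadd_eq_add] at h ⊢
  linear_combination (norm := module) h

theorem ne_of_isotomicMap_eq (hPP' : LinearIndependent K ![P - G, P' - G]) (hκ₀ : κ ≠ 0)
    (hκ : κ ≠ 1) (hO : isotomicMap κ G P P' O = AffineMap.homothety G (-(1 / 2) : K) P') :
    O ≠ AffineMap.homothety G (-(1 / 2) : K) P' := fun h => by
  have h4 := four_smul_sub_of_isotomicMap_eq hκ hO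
  rw [sub_eq_zero.2 h, smul_zero] at h4
  exact hκ₀ (LinearIndependent.pair_iff.1 hPP' κ ((κ - 3) / 2)
    (by linear_combination (norm := module) h4)).1

theorem affineSpan_pair_ne_of_isotomicMap_eq (hPP' : LinearIndependent K ![P - G, P' - G])
    (hκ : κ ≠ 1) (hO : isotomicMap κ G P P' O = AffineMap.homothety G (-(1 / 2) : K) P') :
    line[K, O, AffineMap.homothety G (-(1 / 2) : K) P'] ≠
      line[K, X, AffineMap.homothety G (-(1 / 2) : K) P] := fun h => by
  have hmem : AffineMap.homothety G (-(1 / 2) : K) P ∈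
      line[K, O, AffineMap.homothety G (-(1 / 2) : K) P'] := h ▸ right_mem_affineSpan_pair K _ _
  obtain ⟨s, hs⟩ := mem_affineSpan_pair_iff_exists_lineMap_eq.1 hmem
  have h4 := four_smul_sub_of_isotomicMap_eq hκ hO
  simp only [AffineMap.lineMap_apply, AffineMap.homothety_apply, vsub_eq_sub, vadd_eq_add]
    at h4 hs
  obtain ⟨h₁, h₂⟩ := LinearIndependent.pair_iff.1 hPP' ((1 - s) * κ - 2)
    ((1 - s) * (κ - 3) / 2 + 2) (by linear_combination (norm := module) (1 - s) • h4 - (4 : K) • hs)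
  have hs₁ : s = -1 := by linear_combination -h₁ / 3 + 2 / 3 * h₂
  exact hκ (by linear_combination h₁ / 2 + κ / 2 * hs₁)

theorem eq_of_collinear_complements (hPP' : LinearIndependent K ![P - G, P' - G])
    (hY : Collinear K {P, AffineMap.homothety G (-(1 / 2) : K) P', Y})
    (hY' : Collinear K {P', AffineMap.homothety G (-(1 / 2) : K) P, Y}) :
    Y = G - (P - G + (P' - G)) := by
  have hne : ∀ {R R' : V}, LinearIndependent K ![R - G, R' - G] →
      R ≠ AffineMap.homothety G (-(1 / 2) : K) R' := fun {R R'} hRR' hR => by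
    rw [AffineMap.homothety_apply, vsub_eq_sub, vadd_eq_add, ← sub_eq_iff_eq_add] at hR
    exact one_ne_zero (LinearIndependent.pair_iff.1 hRR' 1 (1 / 2)
      (by linear_combination (norm := module) hR)).1
  obtain ⟨s, hs⟩ := exists_eq_lineMap_of_collinear hY (hne hPP')
  obtain ⟨t, ht⟩ := exists_eq_lineMap_of_collinear hY'
    (hne (LinearIndependent.pair_symm_iff.1 hPP'))
  simp only [AffineMap.lineMap_apply_module, AffineMap.homothety_apply, vsub_eq_sub,
    vadd_eq_add] at hs ht
  obtain ⟨h₁, h₂⟩ := LinearIndependent.pair_iff.1 hPP' (1 - s + t / 2) (t - 1 - s / 2)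
    (by linear_combination (norm := module) ht - hs)
  have hs₂ : s = 2 := by linear_combination (-4 / 3) * h₁ + 2 / 3 * h₂
  rw [hs, hs₂]
  module

theorem mem_affineSpan_pair_of_isotomicMap_eq_self
    (hPP' : LinearIndependent K ![P - G, P' - G]) (hκ : κ ≠ 1) (hS : isotomicMap κ G P P' S = S) :
    S ∈ line[K, G, G - (P - G + (P' - G))] := by
  have h := sub_one_smul_isotomicMap_sub hκ G P P' S
  rw [hS] at h
  have hS' : (κ + 3) • (S - G) = -κ • (P - G + (P' - G)) := by
    linear_combination (norm := module) h
  have hκ₃ : κ + 3 ≠ 0 := fun h₃ => by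
    rw [h₃, zero_smul, eq_comm, neg_smul, neg_eq_zero] at hS'
    have h₀ := (LinearIndependent.pair_iff.1 hPP' κ κ (by rw [← smul_add, hS'])).1
    norm_num [h₀] at h₃
  refine mem_affineSpan_pair_iff_exists_lineMap_eq.2 ⟨κ / (κ + 3), ?_⟩
  rw [AffineMap.lineMap_apply, vsub_eq_sub, vadd_eq_add, ← eq_sub_iff_add_eq, div_eq_inv_mul,
    mul_smul, inv_smul_eq_iff₀ hκ₃, hS']
  module

theorem fixed_point_of_M_general {A B C O O' Y : V} {x y z : K} (hdim : Module.finrank K V = 2)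
    (hABC : AffineIndependent K ![A, B, C]) (hP : IsOrdinary x y z)
    (hxy : x ≠ y) (hyz : y ≠ z) (hxz : x ≠ z) {T T' : V ≃ᵃ[K] V}
    (hT : IsCevianMap A B C x y z T.toAffineMap)
    (hT' : IsCevianMap A B C x⁻¹ y⁻¹ z⁻¹ T'.toAffineMap)
    (hA : ∃ t : K, bary A B C (0 : K) 1 1 - O = t • (T A - isotomcomplement A B C x y z))
    (hB : ∃ t : K, bary B C A (0 : K) 1 1 - O = t • (T B - isotomcomplement A B C x y z))
    (hA' : ∃ t : K, bary A B C (0 : K) 1 1 - O' = t • (T' A - isotomcomplement A B C x⁻¹ y⁻¹ z⁻¹))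
    (hB' : ∃ t : K, bary B C A (0 : K) 1 1 - O' = t • (T' B - isotomcomplement A B C x⁻¹ y⁻¹ z⁻¹))
    (hY : Collinear K {bary A B C x y z, isotomcomplement A B C x y z, Y})
    (hY' : Collinear K {bary A B C x⁻¹ y⁻¹ z⁻¹, isotomcomplement A B C x⁻¹ y⁻¹ z⁻¹, Y}) :
    T (anticomplement K A B C (T' O)) = isotomcomplement A B C x y z ∧
    T (anticomplement K A B C (T' O')) = isotomcomplement A B C x⁻¹ y⁻¹ z⁻¹ ∧
    O ≠ isotomcomplement A B C x y z ∧ O' ≠ isotomcomplement A B C x⁻¹ y⁻¹ z⁻¹ ∧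
    line[K, O, isotomcomplement A B C x y z] ≠ line[K, O', isotomcomplement A B C x⁻¹ y⁻¹ z⁻¹] ∧
    ∀ (S : V) (r : K), r ≠ 1 →
      (∀ X, T (anticomplement K A B C (T' X)) = AffineMap.homothety S r X) →
      S ∈ line[K, O, isotomcomplement A B C x y z] ∧
      S ∈ line[K, O', isotomcomplement A B C x⁻¹ y⁻¹ z⁻¹] ∧
      S ∈ line[K, bary A B C (1 : K) 1 1, Y] := by
  have hspan := affineSpan_triple_eq_top hdim hABC
  have hPP' := linearIndependent_bary_sub_centroid hP hABC hxy hyz hxz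
  have hM := DFunLike.congr_fun (cevian_comp_eq_isotomicMap hspan hP hT hT')
  have hMO := cevian_comp_apply_circumcenter hP hABC hspan hT T.injective hT' hA hB
  have hMO' := (DFunLike.congr_fun (cevian_comp_comm hP hspan hT hT') O').trans
    (cevian_comp_apply_circumcenter hP.inv hABC hspan hT' T'.injective
      (by simpa only [inv_inv]) hA' hB')
  have hκO := (hM O).symm.trans hMO
  have hκO' := (hM O').symm.trans hMO'
  rw [isotomicMap_comm] at hκO'
  simp only [isotomcomplement_inv] at hMO' hκO' hY' ⊢
  rw [eq_of_collinear_complements hPP' hY hY']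
  have hκ₀ := hP.isotomicInvariant_ne_zero
  have hκ₁ := hP.isotomicInvariant_ne_one
  exact ⟨hMO, hMO', ne_of_isotomicMap_eq hPP' hκ₀ hκ₁ hκO,
    ne_of_isotomicMap_eq (LinearIndependent.pair_symm_iff.1 hPP') hκ₀ hκ₁ hκO',
    affineSpan_pair_ne_of_isotomicMap_eq hPP' hκ₁ hκO,
    fun S r hr hS => ⟨mem_affineSpan_pair_of_homothety_eq hr ((hS O).symm.trans hMO),
      mem_affineSpan_pair_of_homothety_eq hr ((hS O').symm.trans hMO'),
      mem_affineSpan_pair_of_isotomicMap_eq_self hPP' hκ₁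
        ((hM S).symm.trans ((hS S).trans (AffineMap.homothety_apply_same S r)))⟩⟩

end Configuration

section Plane

theorem Par.exists_eq_smul {u v : Pt} (h : Par u v) (hv : v ≠ 0) : ∃ t : ℝ, u = t • v := by
  obtain ⟨t, h | h⟩ := h
  · exact ⟨t, h⟩
  · have ht : t ≠ 0 := fun ht => hv (by rw [h, ht, zero_smul])
    exact ⟨t⁻¹, by rw [h, inv_smul_smul₀ ht]⟩

theorem finrank_pt : Module.finrank ℝ Pt = 2 := by simp

theorem cent_eq_bary (A B C : Pt) : cent A B C = bary A B C (1 : ℝ) 1 1 := by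
  rw [cent, bary]
  norm_num

theorem homoth_eq_homothety (Z : Pt) (r : ℝ) (X : Pt) :
    homoth Z r X = AffineMap.homothety Z r X := by
  rw [homoth, AffineMap.homothety_apply, vsub_eq_sub, vadd_eq_add, add_comm]

theorem homoth_cent_neg_two (A B C X : Pt) :
    homoth (cent A B C) (-2) X = anticomplement ℝ A B C X := by
  rw [homoth_eq_homothety, cent_eq_bary, anticomplement]

theorem lineThru_eq_affineSpan (X Y : Pt) : lineThru X Y = line[ℝ, X, Y] := by
  ext Z
  simp only [SetLike.mem_coe, mem_affineSpan_pair_iff_exists_lineMap_eq, lineThru,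
    Set.mem_ofPred_eq, AffineMap.lineMap_apply, vsub_eq_sub, vadd_eq_add, add_comm X, eq_comm]

end Plane

theorem fixed_point_of_M
    (A B C P P' Q Q' D E F D₃ E₃ F₃ : Pt) (x y z : ℝ)
    (hABC : AffineIndependent ℝ ![A, B, C])
    (hsum : x + y + z = 1)
    (hPco : P = x • A + y • B + z • C)
    (hx0 : x ≠ 0) (hy0 : y ≠ 0) (hz0 : z ≠ 0)
    (hx1 : x ≠ 1) (hy1 : y ≠ 1) (hz1 : z ≠ 1)
    (hst : x * y + y * z + z * x ≠ 0)
    (hP' : P' = (y * z / (x * y + y * z + z * x)) • A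
        + (x * z / (x * y + y * z + z * x)) • B
        + (x * y / (x * y + y * z + z * x)) • C)
    (hQ : Q = homoth (cent A B C) (-(1 / 2)) P')
    (hQ' : Q' = homoth (cent A B C) (-(1 / 2)) P)
    (hD : Collinear ℝ {A, P, D} ∧ Collinear ℝ {B, C, D})
    (hE : Collinear ℝ {B, P, E} ∧ Collinear ℝ {A, C, E})
    (hF : Collinear ℝ {C, P, F} ∧ Collinear ℝ {A, B, F})
    (hD₃ : Collinear ℝ {A, P', D₃} ∧ Collinear ℝ {B, C, D₃})
    (hE₃ : Collinear ℝ {B, P', E₃} ∧ Collinear ℝ {A, C, E₃})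
    (hF₃ : Collinear ℝ {C, P', F₃} ∧ Collinear ℝ {A, B, F₃})
    (hxy : x ≠ y) (hyz : y ≠ z) (hxz : x ≠ z)
    (TP : Pt ≃ᵃ[ℝ] Pt) (hTP : TP A = D ∧ TP B = E ∧ TP C = F)
    (TP' : Pt ≃ᵃ[ℝ] Pt) (hTP' : TP' A = D₃ ∧ TP' B = E₃ ∧ TP' C = F₃)
    (O H : Pt)
    (hO : Par (midpoint ℝ B C - O) (D - Q) ∧ Par (midpoint ℝ C A - O) (E - Q) ∧
          Par (midpoint ℝ A B - O) (F - Q))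
    (hH : Par (H - A) (D - Q) ∧ Par (H - B) (E - Q) ∧ Par (H - C) (F - Q))
    (O' H' : Pt)
    (hO' : Par (midpoint ℝ B C - O') (D₃ - Q') ∧ Par (midpoint ℝ C A - O') (E₃ - Q') ∧
           Par (midpoint ℝ A B - O') (F₃ - Q'))
    (hH' : Par (H' - A) (D₃ - Q') ∧ Par (H' - B) (E₃ - Q') ∧ Par (H' - C) (F₃ - Q'))
    (V : Pt) (hV : Collinear ℝ {P, Q, V} ∧ Collinear ℝ {P', Q', V}) :
    TP (homoth (cent A B C) (-2) (TP' O)) = Q ∧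
    TP (homoth (cent A B C) (-2) (TP' O')) = Q' ∧
    O ≠ Q ∧ O' ≠ Q' ∧ lineThru O Q ≠ lineThru O' Q' ∧
    (∀ (S : Pt) (r : ℝ), r ≠ 0 → r ≠ 1 →
      (∀ X : Pt, TP (homoth (cent A B C) (-2) (TP' X)) = homoth S r X) →
      S ∈ lineThru O Q ∧ S ∈ lineThru O' Q' ∧ S ∈ lineThru (cent A B C) V) := by
  rw [← bary_of_sum_eq_one A B C hsum] at hPco
  rw [← bary_inv A B C hx0 hy0 hz0] at hP'
  rw [hP', homoth_eq_homothety, cent_eq_bary, ← isotomcomplement] at hQ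
  rw [hPco, homoth_eq_homothety, cent_eq_bary, ← isotomcomplement_inv] at hQ'
  subst hPco hP' hQ hQ'
  obtain ⟨⟨rfl, rfl, rfl⟩, rfl, rfl, rfl⟩ := And.intro hTP hTP'
  have hP := isOrdinary_of_sum_eq_one hsum hx0 hy0 hz0 hx1 hy1 hz1 hst
  have hT := isCevianMap_of_collinear (T := TP.toAffineMap) hABC hP hD hE hF
  have hT' := isCevianMap_of_collinear (T := TP'.toAffineMap) hABC hP.inv hD₃ hE₃ hF₃
  have hDE := hT.linearIndependent_sub hP hABC TP.injective
  have hDE₃ := hT'.linearIndependent_sub hP.inv hABC TP'.injective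
  rw [midpoint_eq_bary A, midpoint_eq_bary B] at hO hO'
  simp only [homoth_cent_neg_two]
  simp only [lineThru_eq_affineSpan, homoth_eq_homothety, cent_eq_bary,
    SetLike.mem_coe, ne_eq, SetLike.coe_set_eq]
  obtain ⟨hMO, hMO', hOQ, hOQ', hline, hS⟩ := fixed_point_of_M_general finrank_pt hABC hP
    hxy hyz hxz hT hT' (hO.1.exists_eq_smul (hDE.ne_zero 0)) (hO.2.1.exists_eq_smul (hDE.ne_zero 1))
    (hO'.1.exists_eq_smul (hDE₃.ne_zero 0)) (hO'.2.1.exists_eq_smul (hDE₃.ne_zero 1)) hV.1 hV.2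
  exact ⟨hMO, hMO', hOQ, hOQ', hline, fun S r _ => hS S r⟩
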